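/- For all W, V ∈ X the integral defining B(W,V) converges absolutely, and there exists a constant C > 0 such that |B(W,V)| ≤ C ‖W‖_X ‖V‖_X for all W, V ∈ X; that is, B is a bounded sesquilinear form on X × X. -/

import Mathlib

noncomputable section

open MeasureTheory Complex Filter Topology
open scoped Real NNReal ContDiff

/-- The plane `ℝ²`. -/
abbrev R2 : Type := EuclideanSpace ℝ (Fin 2)

/-- Euclidean dot product on `ℝ²`. -/
def rdot (x ξ : R2) : ℝ := x 0 * ξ 0 + x 1 * ξ 1

/-- `testFT φ ξ = ∫ e^{i x·ξ} φ(x) dx`, the (inverse-type) Fourier integral of a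
test function `φ`. -/
def testFT (φ : R2 → ℂ) (ξ : R2) : ℂ :=
  ∫ x : R2, Complex.exp (Complex.I * (rdot x ξ : ℂ)) * φ x

/-- The squared `H^s(ℝ²)` norm of the distribution whose Fourier transform is `F`:
`‖f‖² = (2π)⁻² ∫ (1+|ξ|²)^s |f̂(ξ)|² dξ`. -/
def wnormSq (s : ℝ) (F : R2 → ℂ) : ℝ :=
  ((2 * π) ^ 2)⁻¹ * ∫ ξ : R2, ((1 : ℝ) + ‖ξ‖ ^ 2) ^ s * ‖F ξ‖ ^ 2

/-- The `H^s(ℝ²)` norm (Fourier-side representation). -/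
def wnorm (s : ℝ) (F : R2 → ℂ) : ℝ := Real.sqrt (wnormSq s F)

/-- `F` is the Fourier transform of an element of `H^s(ℝ²)`. -/
def MemHs (s : ℝ) (F : R2 → ℂ) : Prop :=
  AEStronglyMeasurable F (volume : Measure R2) ∧
    Integrable (fun ξ : R2 => ((1 : ℝ) + ‖ξ‖ ^ 2) ^ s * ‖F ξ‖ ^ 2) volume

/-- An element `f` of `H̃^s(Γ)`: a distribution on `ℝ²` of Sobolev regularity `s`
supported in the closure of `Γ`, represented by its Fourier transform `ft`
(a continuous function, `f` being a compactly supported distribution).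
The support condition is expressed by testing against smooth compactly supported
functions `φ` whose support avoids `closure Γ`, via the Parseval pairing
`∫ f φ dx = (2π)⁻² ∫ f̂(ξ) φ̌(ξ) dξ` with `φ̌(ξ) = ∫ e^{ix·ξ} φ(x) dx`. -/
structure HTildeElt (s : ℝ) (Γ : Set R2) where
  ft : R2 → ℂ
  cont : Continuous ft
  mem : Integrable (fun ξ : R2 => ((1 : ℝ) + ‖ξ‖ ^ 2) ^ s * ‖ft ξ‖ ^ 2) volume
  supp : ∀ φ : R2 → ℂ, ContDiff ℝ ∞ φ → HasCompactSupport φ →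
    tsupport φ ∩ closure Γ = ∅ → (∫ ξ : R2, ft ξ * testFT φ ξ) = 0

/-- `Γ` is a bounded Lipschitz domain in `ℝ²`: a nonempty bounded open set whose
boundary is locally, after a rigid motion, the graph of a Lipschitz function with
the domain on one side. -/
def IsLipschitzDomain (Γ : Set R2) : Prop :=
  IsOpen Γ ∧ Bornology.IsBounded Γ ∧ Γ.Nonempty ∧
    ∀ x ∈ frontier Γ, ∃ (e : R2 ≃ₗᵢ[ℝ] R2) (L : ℝ≥0) (f : ℝ → ℝ) (U : Set R2),
      LipschitzWith L f ∧ IsOpen U ∧ x ∈ U ∧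
        ∀ y ∈ U, (y ∈ Γ ↔ f (e y 0) < e y 1)

/-- `ξ·V̂(ξ)`, i.e. `-i` times the Fourier transform of `div V`. -/
def dotFt (F1 F2 : R2 → ℂ) (ξ : R2) : ℂ := (ξ 0 : ℂ) * F1 ξ + (ξ 1 : ℂ) * F2 ξ

/-- `ξ⊥·V̂(ξ)`, i.e. `-i` times the Fourier transform of `curl V`. -/
def curlFt (F1 F2 : R2 → ℂ) (ξ : R2) : ℂ := (ξ 1 : ℂ) * F1 ξ - (ξ 0 : ℂ) * F2 ξ

/-- An element of `X = H̃^{-1/2}_div(Γ)`: a pair of elements of `H̃^{-1/2}(Γ)`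
whose distributional divergence also belongs to `H̃^{-1/2}(Γ)`. -/
structure Xelt (Γ : Set R2) where
  c1 : HTildeElt (-(1/2) : ℝ) Γ
  c2 : HTildeElt (-(1/2) : ℝ) Γ
  divMem : Integrable (fun ξ : R2 =>
    ((1 : ℝ) + ‖ξ‖ ^ 2) ^ (-(1/2) : ℝ) * ‖dotFt c1.ft c2.ft ξ‖ ^ 2) volume

/-- The Fourier transform of `div V`. -/
def divFt {Γ : Set R2} (V : Xelt Γ) (ξ : R2) : ℂ :=
  Complex.I * dotFt V.c1.ft V.c2.ft ξ

/-- The squared `H`-norm `‖V‖²_H` of a vector field. -/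
def HnormSq {Γ : Set R2} (V : Xelt Γ) : ℝ :=
  wnormSq (-(1/2)) V.c1.ft + wnormSq (-(1/2)) V.c2.ft

/-- The squared `X`-norm `‖V‖²_X = ‖V‖²_H + ‖div V‖²_{H̃^{-1/2}}`. -/
def XnormSq {Γ : Set R2} (V : Xelt Γ) : ℝ :=
  HnormSq V + wnormSq (-(1/2)) (divFt V)

/-- The `X`-norm. -/
def Xnorm {Γ : Set R2} (V : Xelt Γ) : ℝ := Real.sqrt (XnormSq V)

/-- `ĝ₀(ξ) = i/√(k²-|ξ|²)`, with the branch `√(k²-|ξ|²) = i√(|ξ|²-k²)` for `|ξ| > k`. -/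
def g0hat (k : ℝ) (ξ : R2) : ℂ :=
  if ‖ξ‖ < k then Complex.I / ((Real.sqrt (k ^ 2 - ‖ξ‖ ^ 2) : ℝ) : ℂ)
  else 1 / ((Real.sqrt (‖ξ‖ ^ 2 - k ^ 2) : ℝ) : ℂ)

/-- The integrand of the sesquilinear form `B`:
`ĝ₀(ξ) [ (|ξ|²-k²) a₁ b̄₁ - k² a₂ b̄₂ ]` with `a₁ = ξ·Ŵ/|ξ|`, `a₂ = ξ⊥·Ŵ/|ξ|`, etc. -/
def Bintegrand (k : ℝ) (F1 F2 G1 G2 : R2 → ℂ) (ξ : R2) : ℂ :=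
  g0hat k ξ *
    (((‖ξ‖ ^ 2 - k ^ 2 : ℝ) : ℂ) * (dotFt F1 F2 ξ * starRingEnd ℂ (dotFt G1 G2 ξ)) -
      ((k ^ 2 : ℝ) : ℂ) * (curlFt F1 F2 ξ * starRingEnd ℂ (curlFt G1 G2 ξ))) /
    ((‖ξ‖ ^ 2 : ℝ) : ℂ)

/-- The sesquilinear form `B(W,V)`. -/
def Bform (k : ℝ) {Γ : Set R2} (W V : Xelt Γ) : ℂ :=
  ∫ ξ : R2, Bintegrand k W.c1.ft W.c2.ft V.c1.ft V.c2.ft ξ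

/-- The sesquilinear form `E(q,V) = B(curl⃗ q, V)`, where
`curl⃗ q = (∂q/∂x₂, -∂q/∂x₁)` has Fourier transform `(iξ₂ q̂, -iξ₁ q̂)`. -/
def Eform (k : ℝ) {Γ : Set R2} (q : HTildeElt (1/2 : ℝ) Γ) (V : Xelt Γ) : ℂ :=
  ∫ ξ : R2, Bintegrand k (fun η => Complex.I * (η 1 : ℂ) * q.ft η)
      (fun η => -(Complex.I * (η 0 : ℂ) * q.ft η)) V.c1.ft V.c2.ft ξ

/-- The inner product of the Hilbert space `X`; by the Riesz representation
theorem, every bounded conjugate-linear functional on `X` is `V ↦ Xinner Y V`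
for a unique `Y ∈ X`, with functional norm `Xnorm Y`. -/
def Xinner {Γ : Set R2} (Y V : Xelt Γ) : ℂ :=
  ((((2 * π) ^ 2)⁻¹ : ℝ) : ℂ) * ∫ ξ : R2, ((((1 : ℝ) + ‖ξ‖ ^ 2) ^ (-(1/2) : ℝ) : ℝ) : ℂ) *
    (Y.c1.ft ξ * starRingEnd ℂ (V.c1.ft ξ) + Y.c2.ft ξ * starRingEnd ℂ (V.c2.ft ξ) +
      divFt Y ξ * starRingEnd ℂ (divFt V ξ))

/-- `√(k²-|ξ|²)`, with the branch `i√(|ξ|²-k²)` for `|ξ| > k`. -/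
def rootk (k : ℝ) (ξ : R2) : ℂ :=
  if ‖ξ‖ < k then ((Real.sqrt (k ^ 2 - ‖ξ‖ ^ 2) : ℝ) : ℂ)
  else Complex.I * ((Real.sqrt (‖ξ‖ ^ 2 - k ^ 2) : ℝ) : ℂ)

/-- The Fourier multiplier `i/(2√(k²-|ξ|²))` of the Helmholtz single-layer
operator `T` with kernel `e^{ik|x-y|}/(4π|x-y|)`. -/
def mT (k : ℝ) (ξ : R2) : ℂ := Complex.I / (2 * rootk k ξ)

/-- The Fourier multiplier `1/(2|ξ|)` of the Laplace single-layer operator `T₀`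
with kernel `1/(4π|x-y|)`. -/
def mT0 (ξ : R2) : ℂ := 1 / (2 * ((‖ξ‖ : ℝ) : ℂ))

/-- The Fourier multiplier of `R = T - T₀`. -/
def mR (k : ℝ) (ξ : R2) : ℂ := mT k ξ - mT0 ξ

/-- The distributions with Fourier data `G` and `E` have the same restriction to
the open set `Γ`: `⟨G - E, φ⟩ = 0` for all smooth `φ` compactly supported in `Γ`
(pairing written on the Fourier side). -/
def AgreeOn (Γ : Set R2) (G E : R2 → ℂ) : Prop :=
  ∀ φ : R2 → ℂ, ContDiff ℝ ∞ φ → HasCompactSupport φ → tsupport φ ⊆ Γ →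
    (∫ ξ : R2, (G ξ - E ξ) * testFT φ ξ) = 0

/-- The duality pairing `⟨f, ψ⟩` between `H^{1/2}(Γ)` and `H̃^{-1/2}(Γ)`, written
on the Fourier side (Plancherel): `(2π)⁻² ∫ f̂(ξ) conj(ψ̂(ξ)) dξ`, where `G = f̂`
is the Fourier data of (an extension of) `f`. -/
def dualPair (G ψ : R2 → ℂ) : ℂ :=
  ((((2 * π) ^ 2)⁻¹ : ℝ) : ℂ) * ∫ ξ : R2, G ξ * starRingEnd ℂ (ψ ξ)

/-- Weight `(1+|ξ|²)^{-1/2}`. -/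
def wt (ξ : R2) : ℝ := ((1 : ℝ) + ‖ξ‖ ^ 2) ^ (-(1/2) : ℝ)

lemma wt_pos (ξ : R2) : 0 < wt ξ := by unfold wt; positivity

lemma wt_eq (ξ : R2) : wt ξ = (Real.sqrt (1 + ‖ξ‖ ^ 2))⁻¹ := by
  unfold wt
  rw [Real.rpow_neg (by positivity), Real.sqrt_eq_rpow]

lemma wt_cont : Continuous wt := by
  have : wt = fun ξ => (Real.sqrt (1 + ‖ξ‖ ^ 2))⁻¹ := funext wt_eq
  rw [this]
  refine Continuous.inv₀ (by fun_prop) (fun ξ => ?_)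
  positivity

/-- Cauchy-Schwarz. -/
lemma cs_aux {f g : R2 → ℝ} (hf : AEStronglyMeasurable f volume)
    (hg : AEStronglyMeasurable g volume) (hf0 : ∀ x, 0 ≤ f x) (hg0 : ∀ x, 0 ≤ g x)
    (hf2 : Integrable (fun x => f x ^ 2) volume) (hg2 : Integrable (fun x => g x ^ 2) volume) :
    Integrable (fun x => f x * g x) volume ∧
      ∫ x, f x * g x ≤ Real.sqrt (∫ x, f x ^ 2) * Real.sqrt (∫ x, g x ^ 2) := by
  have h1 : MemLp f 2 volume := (memLp_two_iff_integrable_sq hf).2 hf2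
  have h2 : MemLp g 2 volume := (memLp_two_iff_integrable_sq hg).2 hg2
  refine ⟨MemLp.integrable_mul h1 h2, ?_⟩
  have h3 := integral_mul_le_Lp_mul_Lq_of_nonneg (μ := (volume : Measure R2)) (p := 2) (q := 2)
    Real.HolderConjugate.two_two (ae_of_all _ hf0) (ae_of_all _ hg0)
    (by simpa using h1) (by simpa using h2)
  simpa [Real.sqrt_eq_rpow] using h3

lemma finrank_R2 : Module.finrank ℝ R2 = 2 := by simp

/-- Decay function. -/
def dec (u : R2) : ℝ := ((1 + ‖u‖) ^ 4)⁻¹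

lemma dec_pos (u : R2) : 0 < dec u := by unfold dec; positivity

lemma dec_cont : Continuous dec := by
  unfold dec
  refine Continuous.inv₀ (by fun_prop) (fun ξ => ?_)
  positivity

lemma integrable_inv_pow (n : ℕ) (hn : 2 < n) :
    Integrable (fun u : R2 => ((1 + ‖u‖) ^ n)⁻¹) volume := by
  have h := integrable_one_add_norm (E := R2) (μ := volume) (r := (n : ℝ))
    (by rw [finrank_R2]; exact_mod_cast hn)
  refine h.congr (ae_of_all _ fun u => ?_)
  simp only
  rw [Real.rpow_neg (by positivity), Real.rpow_natCast]

lemma integrable_dec : Integrable dec volume := integrable_inv_pow 4 (by norm_num)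

/-- Weighted integrability with an explicit bound. -/
lemma pair_bound (F : R2 → ℂ) (hF : Continuous F)
    (hm : Integrable (fun ξ : R2 => wt ξ * ‖F ξ‖ ^ 2) volume) (ξ₀ : R2) :
    Integrable (fun ξ => ‖F ξ‖ * dec (ξ - ξ₀)) volume ∧
    ∫ ξ, ‖F ξ‖ * dec (ξ - ξ₀) ≤ Real.sqrt (∫ ξ, wt ξ * ‖F ξ‖ ^ 2) *
      Real.sqrt ((1 + ‖ξ₀‖) * ∫ u : R2, ((1 + ‖u‖) ^ 7)⁻¹) := by
  have hw := wt_cont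
  have hd := dec_cont
  have hi7 := integrable_inv_pow 7 (by norm_num)
  have hi7' : Integrable (fun ξ : R2 => (1 + ‖ξ₀‖) * ((1 + ‖ξ - ξ₀‖) ^ 7)⁻¹) volume :=
    (hi7.comp_sub_right ξ₀).const_mul _
  have hpt : ∀ ξ, (Real.sqrt ((wt ξ)⁻¹) * dec (ξ - ξ₀)) ^ 2
      ≤ (1 + ‖ξ₀‖) * ((1 + ‖ξ - ξ₀‖) ^ 7)⁻¹ := by
    intro ξ
    rw [mul_pow, Real.sq_sqrt (inv_nonneg.2 (wt_pos ξ).le), wt_eq, inv_inv]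
    unfold dec
    have h1 : Real.sqrt (1 + ‖ξ‖ ^ 2) ≤ 1 + ‖ξ‖ := by
      rw [Real.sqrt_le_left (by positivity)]
      nlinarith [norm_nonneg ξ]
    have h2 : ‖ξ‖ ≤ ‖ξ - ξ₀‖ + ‖ξ₀‖ := by simpa using norm_add_le (ξ - ξ₀) ξ₀
    have h3 : 1 + ‖ξ‖ ≤ (1 + ‖ξ₀‖) * (1 + ‖ξ - ξ₀‖) := by
      nlinarith [mul_nonneg (norm_nonneg ξ₀) (norm_nonneg (ξ - ξ₀))]
    calc Real.sqrt (1 + ‖ξ‖ ^ 2) * (((1 + ‖ξ - ξ₀‖) ^ 4)⁻¹) ^ 2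
        ≤ ((1 + ‖ξ₀‖) * (1 + ‖ξ - ξ₀‖)) * (((1 + ‖ξ - ξ₀‖) ^ 4)⁻¹) ^ 2 := by
          gcongr; exact h1.trans h3
      _ = (1 + ‖ξ₀‖) * ((1 + ‖ξ - ξ₀‖) ^ 7)⁻¹ := by
          have : 0 < 1 + ‖ξ - ξ₀‖ := by positivity
          field_simp
  have hgm : Continuous (fun ξ => Real.sqrt ((wt ξ)⁻¹) * dec (ξ - ξ₀)) := by
    have : Continuous (fun ξ => (wt ξ)⁻¹) := hw.inv₀ (fun ξ => (wt_pos ξ).ne')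
    fun_prop
  have hg2 : Integrable (fun ξ => (Real.sqrt ((wt ξ)⁻¹) * dec (ξ - ξ₀)) ^ 2) volume := by
    refine hi7'.mono' (hgm.pow 2).aestronglyMeasurable (ae_of_all _ fun ξ => ?_)
    rw [Real.norm_of_nonneg (by positivity)]
    exact hpt ξ
  have hfe : ∀ ξ, (Real.sqrt (wt ξ) * ‖F ξ‖) ^ 2 = wt ξ * ‖F ξ‖ ^ 2 := fun ξ => by
    rw [mul_pow, Real.sq_sqrt (wt_pos ξ).le]
  have hpe : ∀ ξ, (Real.sqrt (wt ξ) * ‖F ξ‖) * (Real.sqrt ((wt ξ)⁻¹) * dec (ξ - ξ₀))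
      = ‖F ξ‖ * dec (ξ - ξ₀) := fun ξ => by
    have : Real.sqrt (wt ξ) * Real.sqrt ((wt ξ)⁻¹) = 1 := by
      rw [← Real.sqrt_mul (wt_pos ξ).le, mul_inv_cancel₀ (wt_pos ξ).ne', Real.sqrt_one]
    linear_combination (‖F ξ‖ * dec (ξ - ξ₀)) * this
  have h := cs_aux (f := fun ξ => Real.sqrt (wt ξ) * ‖F ξ‖)
    (g := fun ξ => Real.sqrt ((wt ξ)⁻¹) * dec (ξ - ξ₀))
    (by fun_prop : Continuous _).aestronglyMeasurable hgm.aestronglyMeasurable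
    (fun ξ => by positivity) (fun ξ => mul_nonneg (Real.sqrt_nonneg _) (dec_pos _).le)
    (by simpa only [hfe] using hm) hg2
  simp only [hpe, hfe] at h
  refine ⟨h.1, h.2.trans ?_⟩
  gcongr
  calc _ ≤ ∫ ξ : R2, (1 + ‖ξ₀‖) * ((1 + ‖ξ - ξ₀‖) ^ 7)⁻¹ := integral_mono hg2 hi7' hpt
    _ = _ := by
      rw [integral_const_mul, integral_sub_right_eq_self (fun u : R2 => ((1 + ‖u‖) ^ 7)⁻¹) ξ₀]

/-- Approximate identity. -/
lemma approx_id (G K : R2 → ℂ) (hG : Continuous G) (hK : Continuous K) (C : ℝ)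
    (hKd : ∀ u, ‖K u‖ ≤ C * dec u)
    (hGi : Integrable (fun u => ‖G u‖ * dec u) volume) :
    Tendsto (fun n : ℕ => ∫ u, G u * (((n + 1 : ℝ) ^ 2 : ℝ) * K ((n + 1 : ℝ) • u))) atTop
      (𝓝 (G 0 * ∫ u, K u)) := by
  have hd := dec_cont
  have hC : 0 ≤ C := by
    have := (norm_nonneg _).trans (hKd 0)
    exact nonneg_of_mul_nonneg_left this (dec_pos 0)
  have hdecs : ∀ (c : ℝ), 1 ≤ c → ∀ u, dec (c • u) ≤ dec u := by
    intro c hc u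
    unfold dec
    have : ‖u‖ ≤ ‖c • u‖ := by
      rw [norm_smul, Real.norm_of_nonneg (by linarith)]
      nlinarith [norm_nonneg u]
    gcongr
  have hc1 : ∀ n : ℕ, (1 : ℝ) ≤ n + 1 := fun n => by
    have : (0 : ℝ) ≤ n := n.cast_nonneg
    linarith
  have hInteg : ∀ n : ℕ, Integrable
      (fun u => G u * (((n + 1 : ℝ) ^ 2 : ℝ) * K ((n + 1 : ℝ) • u))) volume := by
    intro n
    refine (hGi.const_mul (C * (n + 1 : ℝ) ^ 2)).mono'
      (by fun_prop : Continuous _).aestronglyMeasurable (ae_of_all _ fun u => ?_)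
    rw [norm_mul, norm_mul, Complex.norm_real, Real.norm_of_nonneg (by positivity)]
    have h1 : ‖K ((n + 1 : ℝ) • u)‖ ≤ C * dec u :=
      (hKd _).trans (mul_le_mul_of_nonneg_left (hdecs _ (hc1 n) u) hC)
    calc _ ≤ ‖G u‖ * ((n + 1 : ℝ) ^ 2 * (C * dec u)) := by gcongr
      _ = _ := by ring
  set S : Set R2 := Metric.ball 0 1 with hS
  have hSm : MeasurableSet S := Metric.isOpen_ball.measurableSet
  -- far part
  have hfar : Tendsto (fun n : ℕ => ∫ u in Sᶜ,
      G u * (((n + 1 : ℝ) ^ 2 : ℝ) * K ((n + 1 : ℝ) • u))) atTop (𝓝 0) := by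
    have hb : ∀ n : ℕ, ‖∫ u in Sᶜ, G u * (((n + 1 : ℝ) ^ 2 : ℝ) * K ((n + 1 : ℝ) • u))‖ ≤
        (16 * C * ∫ u, ‖G u‖ * dec u) * (1 / ((n : ℝ) + 1)) := by
      intro n
      have hpt : ∀ u ∈ Sᶜ, ‖G u * (((n + 1 : ℝ) ^ 2 : ℝ) * K ((n + 1 : ℝ) • u))‖ ≤
          (16 * C * (1 / ((n : ℝ) + 1))) * (‖G u‖ * dec u) := by
        intro u hu
        have hu1 : 1 ≤ ‖u‖ := by simpa [hS] using hu
        rw [norm_mul, norm_mul, Complex.norm_real, Real.norm_of_nonneg (by positivity)]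
        have hcn := hc1 n
        set c : ℝ := (n : ℝ) + 1
        have h2 : c ^ 2 * dec (c • u) ≤ 16 * (1 / c) * dec u := by
          unfold dec
          rw [norm_smul, Real.norm_of_nonneg (by linarith)]
          have h3 : (c * (1 + ‖u‖)) ^ 4 ≤ (2 * (1 + c * ‖u‖)) ^ 4 :=
            pow_le_pow_left₀ (by positivity) (by nlinarith) 4
          have h5 : c ^ 3 ≤ c ^ 4 := pow_le_pow_right₀ hcn (by norm_num)
          rw [← div_eq_mul_inv, ← div_eq_mul_inv, mul_one_div, div_div,
            div_le_div_iff₀ (by positivity) (by positivity)]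
          calc c ^ 2 * (c * (1 + ‖u‖) ^ 4) = c ^ 3 * (1 + ‖u‖) ^ 4 := by ring
            _ ≤ c ^ 4 * (1 + ‖u‖) ^ 4 := by gcongr
            _ = (c * (1 + ‖u‖)) ^ 4 := by ring
            _ ≤ _ := h3
            _ = _ := by ring
        calc ‖G u‖ * (c ^ 2 * ‖K (c • u)‖) ≤ ‖G u‖ * (c ^ 2 * (C * dec (c • u))) := by
              gcongr; exact hKd _
          _ = ‖G u‖ * C * (c ^ 2 * dec (c • u)) := by ring
          _ ≤ ‖G u‖ * C * (16 * (1 / c) * dec u) := by gcongr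
          _ = _ := by ring
      calc _ ≤ ∫ u in Sᶜ, (16 * C * (1 / ((n : ℝ) + 1))) * (‖G u‖ * dec u) :=
            norm_integral_le_of_norm_le (hGi.const_mul _).integrableOn
              ((ae_restrict_iff' hSm.compl).2 (ae_of_all _ hpt))
        _ ≤ ∫ u, (16 * C * (1 / ((n : ℝ) + 1))) * (‖G u‖ * dec u) :=
            setIntegral_le_integral (hGi.const_mul _) (ae_of_all _ fun u => by
              have := (dec_pos u).le
              simp only [Pi.zero_apply]
              positivity)
        _ = _ := by rw [integral_const_mul]; ring
    refine squeeze_zero_norm hb ?_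
    simpa using (tendsto_one_div_add_atTop_nhds_zero_nat (𝕜 := ℝ)).const_mul
      (16 * C * ∫ u, ‖G u‖ * dec u)
  -- near part
  obtain ⟨M, hM⟩ := (isCompact_closedBall (0 : R2) 1).exists_bound_of_continuousOn
    hG.continuousOn
  have hM0 : 0 ≤ M := (norm_nonneg _).trans (hM 0 (by simp))
  have hnear : Tendsto (fun n : ℕ => ∫ u in S,
      G u * (((n + 1 : ℝ) ^ 2 : ℝ) * K ((n + 1 : ℝ) • u))) atTop (𝓝 (G 0 * ∫ u, K u)) := by
    have heq : ∀ n : ℕ, ∫ u in S, G u * (((n + 1 : ℝ) ^ 2 : ℝ) * K ((n + 1 : ℝ) • u)) =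
        ∫ v, S.indicator G (((n : ℝ) + 1)⁻¹ • v) * K v := by
      intro n
      have hc0 : ((n : ℝ) + 1) ≠ 0 := by have := hc1 n; positivity
      rw [← integral_indicator hSm]
      have h := Measure.integral_comp_smul (volume : Measure R2)
        (fun v => S.indicator G (((n : ℝ) + 1)⁻¹ • v) * K v) ((n : ℝ) + 1)
      rw [finrank_R2, abs_of_nonneg (by positivity)] at h
      have h2 : ∫ v, S.indicator G (((n : ℝ) + 1)⁻¹ • v) * K v =
          (((n : ℝ) + 1) ^ 2 : ℝ) • ∫ x, S.indicator G (((n : ℝ) + 1)⁻¹ • ((n : ℝ) + 1) • x) *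
            K (((n : ℝ) + 1) • x) := by
        rw [h, smul_smul, mul_inv_cancel₀ (by positivity), one_smul]
      rw [h2, ← integral_smul]
      congr 1
      ext u
      rw [smul_smul, inv_mul_cancel₀ hc0, one_smul, Complex.real_smul]
      by_cases hu : u ∈ S
      · rw [Set.indicator_of_mem hu, Set.indicator_of_mem hu]; ring
      · rw [Set.indicator_of_notMem hu, Set.indicator_of_notMem hu]; ring
    simp only [heq]
    rw [← integral_const_mul]
    refine tendsto_integral_of_dominated_convergence (fun v => M * (C * dec v)) ?_ ?_ ?_ ?_
    · intro n
      refine AEStronglyMeasurable.mul ?_ hK.aestronglyMeasurable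
      have : Measurable (fun v : R2 => S.indicator G (((n : ℝ) + 1)⁻¹ • v)) :=
        (hG.measurable.indicator hSm).comp (measurable_const_smul _)
      exact this.aestronglyMeasurable
    · exact (integrable_dec.const_mul C).const_mul M
    · intro n
      refine ae_of_all _ fun v => ?_
      rw [norm_mul]
      refine mul_le_mul ?_ (hKd v) (norm_nonneg _) hM0
      by_cases hu : (((n : ℝ) + 1)⁻¹ • v) ∈ S
      · rw [Set.indicator_of_mem hu]
        exact hM _ (Metric.ball_subset_closedBall hu)
      · rw [Set.indicator_of_notMem hu]; simpa using hM0
    · refine ae_of_all _ fun v => Tendsto.mul_const _ ?_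
      have ht : Tendsto (fun n : ℕ => ((n : ℝ) + 1)⁻¹ • v) atTop (𝓝 0) := by
        have := (tendsto_one_div_add_atTop_nhds_zero_nat (𝕜 := ℝ)).smul_const v
        simpa using this
      have hev : ∀ᶠ n : ℕ in atTop, ((n : ℝ) + 1)⁻¹ • v ∈ S :=
        ht (Metric.ball_mem_nhds 0 one_pos)
      refine ((hG.tendsto 0).comp ht).congr' ?_
      filter_upwards [hev] with n hn
      rw [Set.indicator_of_mem hn]; rfl
  have := hnear.add hfar
  rw [add_zero] at this
  refine this.congr fun n => ?_
  exact integral_add_compl hSm (hInteg n)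

open FourierTransform in
lemma testFT_schwartz (f : SchwartzMap R2 ℂ) (ξ : R2) :
    testFT f ξ = (𝓕⁻ f : SchwartzMap R2 ℂ) ((2 * π)⁻¹ • ξ) := by
  rw [SchwartzMap.fourierInv_coe, Real.fourierInv_eq']
  unfold testFT
  congr 1
  ext x
  rw [smul_eq_mul]
  congr 2
  have h : 2 * π * inner ℝ x ((2 * π)⁻¹ • ξ) = rdot x ξ := by
    rw [inner_smul_right, ← mul_assoc, mul_inv_cancel₀ (by positivity), one_mul]
    simp only [PiLp.inner_apply, Fin.sum_univ_two, rdot]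
    simp [mul_comm]
  rw [h, mul_comm]

open FourierTransform in
lemma testFT_props (f : SchwartzMap R2 ℂ) :
    Continuous (testFT f) ∧ (∃ C, ∀ u, ‖testFT f u‖ ≤ C * dec u) ∧
      ∫ u, testFT f u = (((2 * π) ^ 2 : ℝ) : ℂ) * f 0 := by
  have hfun : testFT f = fun ξ => (𝓕⁻ f : SchwartzMap R2 ℂ) ((2 * π)⁻¹ • ξ) :=
    funext (testFT_schwartz f)
  rw [hfun]
  set g : SchwartzMap R2 ℂ := 𝓕⁻ f with hg
  refine ⟨g.continuous.comp (continuous_const_smul _), ?_, ?_⟩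
  · have h := fun x => SchwartzMap.one_add_le_sup_seminorm_apply (𝕜 := ℝ) (m := (4, 0))
      (k := 4) (n := 0) le_rfl le_rfl g x
    simp only [norm_iteratedFDeriv_zero] at h
    set A := 2 ^ 4 * ((Finset.Iic (4, 0)).sup fun m => SchwartzMap.seminorm ℝ m.1 m.2) g
    refine ⟨A * (2 * π) ^ 4, fun u => ?_⟩
    have hu := h ((2 * π)⁻¹ • u)
    unfold dec
    rw [← div_eq_mul_inv, le_div_iff₀ (by positivity)]
    have h2 : 1 + ‖u‖ ≤ (2 * π) * (1 + ‖(2 * π)⁻¹ • u‖) := by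
      rw [norm_smul, Real.norm_of_nonneg (by positivity), mul_add, ← mul_assoc,
        mul_inv_cancel₀ (by positivity)]
      nlinarith [Real.pi_gt_three]
    calc ‖g ((2 * π)⁻¹ • u)‖ * (1 + ‖u‖) ^ 4
        ≤ ‖g ((2 * π)⁻¹ • u)‖ * ((2 * π) * (1 + ‖(2 * π)⁻¹ • u‖)) ^ 4 := by gcongr
      _ = ((1 + ‖(2 * π)⁻¹ • u‖) ^ 4 * ‖g ((2 * π)⁻¹ • u)‖) * (2 * π) ^ 4 := by ring
      _ ≤ _ := by gcongr
  · have h := Measure.integral_comp_smul (volume : Measure R2) g ((2 * π)⁻¹)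
    rw [h, finrank_R2, inv_pow, inv_inv, abs_of_nonneg (by positivity), Complex.real_smul]
    congr 1
    have h2 : (𝓕 g : SchwartzMap R2 ℂ) = f := by rw [hg]; simp
    have h3 : (𝓕 g : SchwartzMap R2 ℂ) 0 = ∫ u, g u := by
      rw [SchwartzMap.fourier_coe, Real.fourier_eq']
      simp
    rw [← h3, h2]

lemma exp_norm_one (t : ℝ) : ‖Complex.exp (Complex.I * (t : ℂ))‖ = 1 := by
  rw [mul_comm]; exact Complex.norm_exp_ofReal_mul_I t

lemma rdot_cont (ξ : R2) : Continuous (fun x : R2 => rdot x ξ) := by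
  unfold rdot; fun_prop

/-- Modulation plus dilation. -/
lemma testFT_mod_dil (f : SchwartzMap R2 ℂ) (c : ℝ) (hc : 0 < c) (ξ₀ ξ : R2) :
    testFT (fun x => Complex.exp (-(Complex.I * (rdot x ξ₀ : ℂ))) * f (c⁻¹ • x)) ξ =
      ((c ^ 2 : ℝ) : ℂ) * testFT f (c • (ξ - ξ₀)) := by
  unfold testFT
  have h := Measure.integral_comp_smul (volume : Measure R2)
    (fun x => Complex.exp (Complex.I * (rdot x (c • (ξ - ξ₀)) : ℂ)) * f x) (c⁻¹)
  rw [finrank_R2, inv_pow, inv_inv, abs_of_nonneg (by positivity), Complex.real_smul] at h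
  rw [← h]
  congr 1
  ext x
  rw [← mul_assoc, ← Complex.exp_add]
  congr 2
  have : rdot (c⁻¹ • x) (c • (ξ - ξ₀)) = rdot x ξ - rdot x ξ₀ := by
    simp only [rdot, PiLp.smul_apply, PiLp.sub_apply, smul_eq_mul]
    field_simp
    ring
  rw [this]
  push_cast
  ring

/-- Uniform local bound for transforms of elements of `H̃^{-1/2}(Γ)`. -/
lemma local_bound (Γ : Set R2) (hb : Bornology.IsBounded Γ) (ρ : ℝ) (hρ : 0 ≤ ρ) :
    ∃ C, 0 ≤ C ∧ ∀ u : HTildeElt (-(1/2) : ℝ) Γ, ∀ ξ, ‖ξ‖ ≤ ρ →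
      ‖u.ft ξ‖ ≤ C * Real.sqrt (∫ η, wt η * ‖u.ft η‖ ^ 2) := by
  obtain ⟨r, hr0, hr⟩ : ∃ r : ℝ, 0 < r ∧ closure Γ ⊆ Metric.ball 0 r := by
    obtain ⟨r, hr⟩ := hb.subset_closedBall (0 : R2)
    refine ⟨max r 0 + 1, by positivity, ?_⟩
    refine (closure_minimal hr Metric.isClosed_closedBall).trans ?_
    exact Metric.closedBall_subset_ball (by linarith [le_max_left r 0])
  let χ : ContDiffBump (0 : R2) := ⟨r, r + 1, hr0, by linarith⟩
  let f₀ : R2 → ℂ := fun x => ((χ x : ℝ) : ℂ)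
  have hf₀s : ContDiff ℝ ∞ f₀ := Complex.ofRealCLM.contDiff.comp χ.contDiff
  have hf₀c : HasCompactSupport f₀ :=
    χ.hasCompactSupport.comp_left (g := fun t : ℝ => (t : ℂ)) (by simp)
  have hf₀1 : ∀ x, ‖x‖ ≤ r → f₀ x = 1 := by
    intro x hx
    have : χ x = 1 := χ.one_of_mem_closedBall (by simpa [χ] using hx)
    simp [f₀, this]
  let f : SchwartzMap R2 ℂ := hf₀c.toSchwartzMap hf₀s
  have hff : ∀ x, f x = f₀ x := fun x => rfl
  have hfeq : (f : R2 → ℂ) = f₀ := rfl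
  obtain ⟨hKc, ⟨C, hKd⟩, hKi⟩ := testFT_props f
  have hf0 : f 0 = 1 := by rw [hff]; exact hf₀1 0 (by simpa using hr0.le)
  rw [hf0, mul_one] at hKi
  set K := testFT f with hK
  have hC : 0 ≤ C := nonneg_of_mul_nonneg_left ((norm_nonneg _).trans (hKd 0)) (dec_pos 0)
  set J := ∫ u : R2, ((1 + ‖u‖) ^ 7)⁻¹ with hJ
  have hJ0 : 0 ≤ J := integral_nonneg fun u => by positivity
  refine ⟨((2 * π) ^ 2)⁻¹ * (C * Real.sqrt ((1 + ρ) * J)), by positivity, fun u ξ₀ hξ₀ => ?_⟩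
  obtain ⟨hpi, hpb⟩ := pair_bound u.ft u.cont u.mem ξ₀
  have hdc := dec_cont
  have huc := u.cont
  have hGi : Integrable (fun v => ‖u.ft (v + ξ₀)‖ * dec v) volume := by
    have := hpi.comp_add_right ξ₀
    simpa using this
  have hlim := approx_id (fun v => u.ft (v + ξ₀)) K (by fun_prop) hKc C hKd hGi
  have hdecs : ∀ (c : ℝ), 1 ≤ c → ∀ u, dec (c • u) ≤ dec u := by
    intro c hc u
    unfold dec
    have : ‖u‖ ≤ ‖c • u‖ := by
      rw [norm_smul, Real.norm_of_nonneg (by linarith)]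
      nlinarith [norm_nonneg u]
    gcongr
  have hintc : ∀ c : ℝ, 1 ≤ c →
      Integrable (fun ξ => u.ft ξ * (((c ^ 2 : ℝ) : ℂ) * K (c • (ξ - ξ₀)))) volume := by
    intro c hc
    refine (hpi.const_mul (C * c ^ 2)).mono'
      (by fun_prop : Continuous _).aestronglyMeasurable (ae_of_all _ fun ξ => ?_)
    rw [norm_mul, norm_mul, Complex.norm_real, Real.norm_of_nonneg (by positivity)]
    have h1 : ‖K (c • (ξ - ξ₀))‖ ≤ C * dec (ξ - ξ₀) :=
      (hKd _).trans (mul_le_mul_of_nonneg_left (hdecs _ hc _) hC)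
    calc _ ≤ ‖u.ft ξ‖ * (c ^ 2 * (C * dec (ξ - ξ₀))) := by gcongr
      _ = _ := by ring
  have hconst : ∀ c : ℝ, 1 ≤ c →
      ∫ ξ, u.ft ξ * (((c ^ 2 : ℝ) : ℂ) * K (c • (ξ - ξ₀))) = ∫ ξ, u.ft ξ * K (ξ - ξ₀) := by
    intro c hc
    have hc0 : 0 < c := by linarith
    let e : R2 → ℂ := fun x => Complex.exp (-(Complex.I * (rdot x ξ₀ : ℂ)))
    have hes : ContDiff ℝ ∞ e := by
      have h1 : ContDiff ℝ ∞ (fun x : R2 => rdot x ξ₀) := by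
        unfold rdot; fun_prop
      have h2 : ContDiff ℝ ∞ (fun x : R2 => ((rdot x ξ₀ : ℝ) : ℂ)) :=
        Complex.ofRealCLM.contDiff.comp h1
      exact (contDiff_const.mul h2).neg.cexp
    have hds : ContDiff ℝ ∞ (fun x : R2 => f₀ (c⁻¹ • x)) :=
      hf₀s.comp (contDiff_const_smul _)
    have hdc : HasCompactSupport (fun x : R2 => f₀ (c⁻¹ • x)) :=
      hf₀c.comp_smul (inv_ne_zero hc0.ne')
    let φ : R2 → ℂ := fun x => e x * f₀ (c⁻¹ • x) - e x * f₀ x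
    have hφ0 : ∀ x ∈ Metric.ball (0 : R2) r, φ x = 0 := by
      intro x hx
      have hx' : ‖x‖ ≤ r := by
        have : ‖x‖ < r := by simpa using hx
        exact this.le
      have h1 : ‖c⁻¹ • x‖ ≤ r := by
        rw [norm_smul, Real.norm_of_nonneg (by positivity)]
        have : c⁻¹ ≤ 1 := inv_le_one_of_one_le₀ hc
        nlinarith [norm_nonneg x]
      simp only [φ, hf₀1 _ hx', hf₀1 _ h1, sub_self]
    have hsup := u.supp φ ((hes.mul hds).sub (hes.mul hf₀s))
      ((hdc.mul_left).sub (hf₀c.mul_left)) (by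
        rw [← Set.disjoint_iff_inter_eq_empty]
        refine Disjoint.mono_right hr ?_
        refine Disjoint.closure_left ?_ Metric.isOpen_ball
        rw [Set.disjoint_left]
        intro x hx hx'
        exact hx (hφ0 x hx'))
    have hFT : ∀ ξ, testFT φ ξ = ((c ^ 2 : ℝ) : ℂ) * K (c • (ξ - ξ₀)) - K (ξ - ξ₀) := by
      intro ξ
      have e1 := testFT_mod_dil f c hc0 ξ₀ ξ
      have e2 := testFT_mod_dil f 1 one_pos ξ₀ ξ
      simp only [inv_one, one_smul, one_pow, Complex.ofReal_one, one_mul] at e2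
      rw [← hK] at e1 e2
      rw [← e1, ← e2]
      unfold testFT
      have hexpc : Continuous (fun x : R2 => Complex.exp (Complex.I * (rdot x ξ : ℂ))) := by
        have := rdot_cont ξ
        fun_prop
      rw [← integral_sub]
      · congr 1
        ext x
        simp only [φ, e, hff]
        ring
      · exact (hexpc.mul (hes.continuous.mul hds.continuous)).integrable_of_hasCompactSupport
          (hdc.mul_left.mul_left)
      · exact (hexpc.mul (hes.continuous.mul hf₀s.continuous)).integrable_of_hasCompactSupport
          (hf₀c.mul_left.mul_left)
    simp only [hFT, mul_sub] at hsup
    have i1 : Integrable (fun ξ => u.ft ξ * K (ξ - ξ₀)) volume := by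
      simpa using hintc 1 le_rfl
    rw [integral_sub (hintc c hc) i1] at hsup
    exact sub_eq_zero.1 hsup
  have hseq : ∀ n : ℕ, ∫ v, u.ft (v + ξ₀) * (((n + 1 : ℝ) ^ 2 : ℝ) * K ((n + 1 : ℝ) • v)) =
      ∫ ξ, u.ft ξ * K (ξ - ξ₀) := by
    intro n
    rw [← hconst (n + 1) (by have : (0 : ℝ) ≤ n := n.cast_nonneg
                             linarith)]
    rw [← integral_add_right_eq_self (fun ξ => u.ft ξ *
      ((((n + 1 : ℝ) ^ 2 : ℝ) : ℂ) * K ((n + 1 : ℝ) • (ξ - ξ₀)))) ξ₀]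
    simp only [add_sub_cancel_right]
  simp only [hseq] at hlim
  have hval := tendsto_nhds_unique hlim tendsto_const_nhds
  rw [hKi, zero_add] at hval
  have hn : ‖u.ft ξ₀‖ * (2 * π) ^ 2 ≤ C * ∫ ξ, ‖u.ft ξ‖ * dec (ξ - ξ₀) := by
    have h1 : ‖u.ft ξ₀‖ * (2 * π) ^ 2 = ‖∫ ξ, u.ft ξ * K (ξ - ξ₀)‖ := by
      rw [← hval, norm_mul, Complex.norm_real, Real.norm_of_nonneg (by positivity)]
    rw [h1, ← integral_const_mul]
    refine norm_integral_le_of_norm_le (hpi.const_mul C) (ae_of_all _ fun ξ => ?_)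
    rw [norm_mul]
    calc _ ≤ ‖u.ft ξ‖ * (C * dec (ξ - ξ₀)) := by gcongr; exact hKd _
      _ = _ := by ring
  rw [← le_div_iff₀ (by positivity)] at hn
  refine hn.trans ?_
  rw [div_eq_inv_mul, mul_assoc, mul_assoc]
  gcongr
  rw [mul_comm]
  refine hpb.trans ?_
  gcongr

lemma g0_norm (k : ℝ) (hk : 0 < k) (ξ : R2) :
    ‖g0hat k ξ‖ = (Real.sqrt |‖ξ‖ ^ 2 - k ^ 2|)⁻¹ := by
  unfold g0hat
  split_ifs with h
  · have h2 : ‖ξ‖ ^ 2 < k ^ 2 := by gcongr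
    rw [norm_div, Complex.norm_I, Complex.norm_real, Real.norm_of_nonneg (Real.sqrt_nonneg _),
      one_div, abs_of_neg (by linarith), neg_sub]
  · have h2 : k ^ 2 ≤ ‖ξ‖ ^ 2 := by
      have := not_lt.1 h
      gcongr
    rw [norm_div, norm_one, Complex.norm_real, Real.norm_of_nonneg (Real.sqrt_nonneg _),
      one_div, abs_of_nonneg (by linarith)]

lemma g0_meas (k : ℝ) : Measurable (g0hat k) := by
  unfold g0hat
  refine Measurable.ite (measurableSet_lt (by fun_prop) (by fun_prop)) ?_ ?_
  · fun_prop
  · fun_prop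

lemma abs_rpow_int (r : ℝ) (hr : 0 < r) :
    IntegrableOn (fun t : ℝ => ‖t‖ ^ (-(1/2) : ℝ)) (Metric.ball 0 r) volume := by
  rw [integrableOn_fun_norm_addHaar (volume : Measure ℝ)
    (f := fun t : ℝ => t ^ (-(1/2) : ℝ))]
  simp only [Module.finrank_self, Nat.sub_self, pow_zero, one_smul]
  exact (intervalIntegral.integrableOn_Ioo_rpow_iff hr).2 (by norm_num)

lemma g0_int (k : ℝ) (hk : 0 < k) :
    Integrable ((Metric.closedBall (0 : R2) (2 * k)).indicator fun ξ => ‖g0hat k ξ‖) volume := by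
  let f : ℝ → ℝ := (Set.Iic (2 * k)).indicator fun y => (Real.sqrt |y ^ 2 - k ^ 2|)⁻¹
  have hfe : ((Metric.closedBall (0 : R2) (2 * k)).indicator fun ξ => ‖g0hat k ξ‖) =
      fun ξ => f ‖ξ‖ := by
    ext ξ
    by_cases h : ‖ξ‖ ≤ 2 * k
    · rw [Set.indicator_of_mem (by simpa using h), g0_norm k hk]
      simp only [f]
      rw [Set.indicator_of_mem (by simpa using h)]
    · rw [Set.indicator_of_notMem (by simpa using h)]
      simp only [f]
      rw [Set.indicator_of_notMem (by simpa using h)]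
  rw [hfe, integrable_fun_norm_addHaar (volume : Measure R2), finrank_R2]
  have hb0 := (integrable_indicator_iff Metric.isOpen_ball.measurableSet).2
    (abs_rpow_int (2 * k) (by positivity))
  have hb := ((hb0.comp_sub_right k).const_mul (2 * k * (Real.sqrt k)⁻¹)).integrableOn
    (s := Set.Ioi (0 : ℝ))
  have hfm : Measurable f := by
    refine Measurable.indicator ?_ measurableSet_Iic
    fun_prop
  refine Integrable.mono' hb (by fun_prop : Measurable _).aestronglyMeasurable ?_
  refine (ae_restrict_iff' measurableSet_Ioi).2 (ae_of_all _ fun y hy => ?_)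
  have hy0 : 0 < y := hy
  have hnn : ∀ t : ℝ, 0 ≤ (Metric.ball (0 : ℝ) (2 * k)).indicator
      (fun t : ℝ => ‖t‖ ^ (-(1/2) : ℝ)) t :=
    fun t => Set.indicator_nonneg (fun t _ => by positivity) t
  by_cases h : y ≤ 2 * k
  · have hm : y - k ∈ Metric.ball (0 : ℝ) (2 * k) := by
      simp only [Metric.mem_ball, dist_zero_right, Real.norm_eq_abs, abs_lt]
      constructor <;> linarith
    simp only [f]
    rw [Set.indicator_of_mem hm, Set.indicator_of_mem (by simpa using h)]
    rw [Real.rpow_neg (norm_nonneg _), ← Real.sqrt_eq_rpow, Real.norm_eq_abs (y - k),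
      Real.norm_of_nonneg (by positivity), mul_assoc, ← mul_inv, ← Real.sqrt_mul hk.le]
    simp only [smul_eq_mul, Nat.add_one_sub_one, pow_one]
    by_cases hyk : y = k
    · simp [hyk]
    have hpos : 0 < |y - k| := abs_pos.2 (sub_ne_zero.2 hyk)
    have h1 : k * |y - k| ≤ |y ^ 2 - k ^ 2| := by
      rw [show y ^ 2 - k ^ 2 = (y + k) * (y - k) by ring, abs_mul,
        abs_of_pos (by linarith : 0 < y + k)]
      gcongr
      linarith
    gcongr
  · simp only [f]
    rw [Set.indicator_of_notMem (by simpa using h)]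
    have := hnn (y - k)
    simp only [smul_zero, norm_zero]
    positivity

lemma dot_le (F1 F2 : R2 → ℂ) (ξ : R2) :
    ‖dotFt F1 F2 ξ‖ ≤ ‖ξ‖ * Real.sqrt (‖F1 ξ‖ ^ 2 + ‖F2 ξ‖ ^ 2) := by
  have hx := EuclideanSpace.real_norm_sq_eq ξ
  rw [Fin.sum_univ_two] at hx
  have h1 : ‖dotFt F1 F2 ξ‖ ≤ |ξ 0| * ‖F1 ξ‖ + |ξ 1| * ‖F2 ξ‖ := by
    unfold dotFt
    refine (norm_add_le _ _).trans ?_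
    simp
  refine h1.trans (abs_le_of_sq_le_sq' ?_ (by positivity)).2
  rw [mul_pow, Real.sq_sqrt (by positivity), hx, ← sq_abs (ξ 0), ← sq_abs (ξ 1)]
  nlinarith [sq_nonneg (|ξ 0| * ‖F2 ξ‖ - |ξ 1| * ‖F1 ξ‖)]

lemma curl_le (F1 F2 : R2 → ℂ) (ξ : R2) :
    ‖curlFt F1 F2 ξ‖ ≤ ‖ξ‖ * Real.sqrt (‖F1 ξ‖ ^ 2 + ‖F2 ξ‖ ^ 2) := by
  have hx := EuclideanSpace.real_norm_sq_eq ξ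
  rw [Fin.sum_univ_two] at hx
  have h1 : ‖curlFt F1 F2 ξ‖ ≤ |ξ 1| * ‖F1 ξ‖ + |ξ 0| * ‖F2 ξ‖ := by
    unfold curlFt
    refine (norm_sub_le _ _).trans ?_
    simp
  refine h1.trans (abs_le_of_sq_le_sq' ?_ (by positivity)).2
  rw [mul_pow, Real.sq_sqrt (by positivity), hx, ← sq_abs (ξ 0), ← sq_abs (ξ 1)]
  nlinarith [sq_nonneg (|ξ 1| * ‖F2 ξ‖ - |ξ 0| * ‖F1 ξ‖)]

lemma B_norm_le (k : ℝ) (F1 F2 G1 G2 : R2 → ℂ) (ξ : R2) :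
    ‖Bintegrand k F1 F2 G1 G2 ξ‖ ≤ ‖g0hat k ξ‖ *
      (|‖ξ‖ ^ 2 - k ^ 2| * (‖dotFt F1 F2 ξ‖ * ‖dotFt G1 G2 ξ‖) +
        k ^ 2 * (‖curlFt F1 F2 ξ‖ * ‖curlFt G1 G2 ξ‖)) / ‖ξ‖ ^ 2 := by
  unfold Bintegrand
  rw [norm_div, norm_mul, Complex.norm_real, Real.norm_of_nonneg (sq_nonneg ‖ξ‖)]
  gcongr
  refine (norm_sub_le _ _).trans ?_
  rw [norm_mul, norm_mul, norm_mul, norm_mul, RCLike.norm_conj, RCLike.norm_conj,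
    Complex.norm_real, Complex.norm_real, Real.norm_of_nonneg (sq_nonneg k), Real.norm_eq_abs]

lemma B_near (k : ℝ) (F1 F2 G1 G2 : R2 → ℂ) (ξ : R2) (h : ‖ξ‖ ≤ 2 * k) :
    ‖Bintegrand k F1 F2 G1 G2 ξ‖ ≤ ‖g0hat k ξ‖ * (5 * k ^ 2 *
      (Real.sqrt (‖F1 ξ‖ ^ 2 + ‖F2 ξ‖ ^ 2) * Real.sqrt (‖G1 ξ‖ ^ 2 + ‖G2 ξ‖ ^ 2))) := by
  refine (B_norm_le k F1 F2 G1 G2 ξ).trans ?_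
  set f := Real.sqrt (‖F1 ξ‖ ^ 2 + ‖F2 ξ‖ ^ 2)
  set g := Real.sqrt (‖G1 ξ‖ ^ 2 + ‖G2 ξ‖ ^ 2)
  have hf : 0 ≤ f := Real.sqrt_nonneg _
  have hg : 0 ≤ g := Real.sqrt_nonneg _
  have hk0 : 0 ≤ ‖ξ‖ := norm_nonneg ξ
  have h1 : |‖ξ‖ ^ 2 - k ^ 2| ≤ 4 * k ^ 2 := by
    rw [abs_le]
    constructor <;> nlinarith
  have h2 : ‖dotFt F1 F2 ξ‖ * ‖dotFt G1 G2 ξ‖ ≤ (‖ξ‖ * f) * (‖ξ‖ * g) :=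
    mul_le_mul (dot_le _ _ _) (dot_le _ _ _) (norm_nonneg _) (by positivity)
  have h3 : ‖curlFt F1 F2 ξ‖ * ‖curlFt G1 G2 ξ‖ ≤ (‖ξ‖ * f) * (‖ξ‖ * g) :=
    mul_le_mul (curl_le _ _ _) (curl_le _ _ _) (norm_nonneg _) (by positivity)
  refine div_le_of_le_mul₀ (by positivity) (by positivity) ?_
  calc _ ≤ ‖g0hat k ξ‖ * (4 * k ^ 2 * ((‖ξ‖ * f) * (‖ξ‖ * g)) +
        k ^ 2 * ((‖ξ‖ * f) * (‖ξ‖ * g))) := by gcongr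
    _ = _ := by ring

/-- Pointwise size `√(|F₁|²+|F₂|²+|ξ·F|²)`. -/
def Nsz (F1 F2 : R2 → ℂ) (ξ : R2) : ℝ :=
  Real.sqrt (‖F1 ξ‖ ^ 2 + ‖F2 ξ‖ ^ 2 + ‖dotFt F1 F2 ξ‖ ^ 2)

lemma B_far (k : ℝ) (hk : 0 < k) (F1 F2 G1 G2 : R2 → ℂ) (ξ : R2) (h : 2 * k < ‖ξ‖) :
    ‖Bintegrand k F1 F2 G1 G2 ξ‖ ≤ ((1 + 2 * k ^ 2) * (1 + 1 / (2 * k))) *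
      (wt ξ * (Nsz F1 F2 ξ * Nsz G1 G2 ξ)) := by
  refine (B_norm_le k F1 F2 G1 G2 ξ).trans ?_
  have hfN : Real.sqrt (‖F1 ξ‖ ^ 2 + ‖F2 ξ‖ ^ 2) ≤ Nsz F1 F2 ξ :=
    Real.sqrt_le_sqrt (by nlinarith [sq_nonneg ‖dotFt F1 F2 ξ‖])
  have hgN : Real.sqrt (‖G1 ξ‖ ^ 2 + ‖G2 ξ‖ ^ 2) ≤ Nsz G1 G2 ξ :=
    Real.sqrt_le_sqrt (by nlinarith [sq_nonneg ‖dotFt G1 G2 ξ‖])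
  have hfD : ‖dotFt F1 F2 ξ‖ ≤ Nsz F1 F2 ξ :=
    Real.le_sqrt_of_sq_le (by nlinarith [sq_nonneg ‖F1 ξ‖, sq_nonneg ‖F2 ξ‖])
  have hgD : ‖dotFt G1 G2 ξ‖ ≤ Nsz G1 G2 ξ :=
    Real.le_sqrt_of_sq_le (by nlinarith [sq_nonneg ‖G1 ξ‖, sq_nonneg ‖G2 ξ‖])
  have hF0 : 0 ≤ Nsz F1 F2 ξ := Real.sqrt_nonneg _
  have hG0 : 0 ≤ Nsz G1 G2 ξ := Real.sqrt_nonneg _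
  have hcF := (curl_le F1 F2 ξ).trans (mul_le_mul_of_nonneg_left hfN (norm_nonneg ξ))
  have hcG := (curl_le G1 G2 ξ).trans (mul_le_mul_of_nonneg_left hgN (norm_nonneg ξ))
  rw [g0_norm k hk, wt_eq]
  set NF := Nsz F1 F2 ξ
  set NG := Nsz G1 G2 ξ
  set x := ‖ξ‖
  have hx0 : 0 < x := by linarith
  have hd : 0 < x ^ 2 - k ^ 2 := by nlinarith
  rw [abs_of_pos hd]
  set s := Real.sqrt (x ^ 2 - k ^ 2)
  have hs : 0 < s := Real.sqrt_pos.2 hd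
  have hss : s ^ 2 = x ^ 2 - k ^ 2 := Real.sq_sqrt hd.le
  have hsx : s ≤ x := by nlinarith
  have hxs : x ≤ 2 * s := by nlinarith
  rw [← hss]
  have e1 : ‖dotFt F1 F2 ξ‖ * ‖dotFt G1 G2 ξ‖ ≤ NF * NG :=
    mul_le_mul hfD hgD (norm_nonneg _) hF0
  have e2 : ‖curlFt F1 F2 ξ‖ * ‖curlFt G1 G2 ξ‖ ≤ (x * NF) * (x * NG) :=
    mul_le_mul hcF hcG (norm_nonneg _) (by positivity)
  have hw : x⁻¹ ≤ (1 + 1 / (2 * k)) * (Real.sqrt (1 + x ^ 2))⁻¹ := by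
    have h1 : Real.sqrt (1 + x ^ 2) ≤ 1 + x := by
      rw [Real.sqrt_le_left (by positivity)]
      nlinarith
    have h2 : 1 + x ≤ (1 + 1 / (2 * k)) * x := by
      have : 1 ≤ 1 / (2 * k) * x := by
        rw [one_div, inv_mul_eq_div, le_div_iff₀ (by positivity)]; linarith
      linarith
    have h3 : 0 < Real.sqrt (1 + x ^ 2) := by positivity
    rw [← div_eq_mul_inv, le_div_iff₀ h3, inv_mul_eq_div, div_le_iff₀ hx0]
    exact h1.trans h2
  calc s⁻¹ * (s ^ 2 * (‖dotFt F1 F2 ξ‖ * ‖dotFt G1 G2 ξ‖) +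
        k ^ 2 * (‖curlFt F1 F2 ξ‖ * ‖curlFt G1 G2 ξ‖)) / x ^ 2
      ≤ s⁻¹ * (s ^ 2 * (NF * NG) + k ^ 2 * ((x * NF) * (x * NG))) / x ^ 2 := by gcongr
    _ = (s / x ^ 2 + k ^ 2 * s⁻¹) * (NF * NG) := by field_simp
    _ ≤ (x⁻¹ + k ^ 2 * (2 * x⁻¹)) * (NF * NG) := by
        have a1 : s / x ^ 2 ≤ x⁻¹ := by
          rw [div_le_iff₀ (by positivity)]
          have : x⁻¹ * x ^ 2 = x := by field_simp
          linarith
        have a2 : s⁻¹ ≤ 2 * x⁻¹ := by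
          rw [← div_eq_mul_inv, le_div_iff₀ hx0, inv_mul_eq_div, div_le_iff₀ hs]
          exact hxs
        gcongr
    _ = (1 + 2 * k ^ 2) * x⁻¹ * (NF * NG) := by ring
    _ ≤ (1 + 2 * k ^ 2) * ((1 + 1 / (2 * k)) * (Real.sqrt (1 + x ^ 2))⁻¹) * (NF * NG) := by
        gcongr
    _ = _ := by ring

/-- `∫ w (|F₁|²+|F₂|²+|ξ·F|²)`. -/
def Tsz {Γ : Set R2} (V : Xelt Γ) : ℝ := ∫ ξ, wt ξ * Nsz V.c1.ft V.c2.ft ξ ^ 2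

lemma dotFt_cont {F1 F2 : R2 → ℂ} (h1 : Continuous F1) (h2 : Continuous F2) :
    Continuous (dotFt F1 F2) := by
  unfold dotFt; fun_prop

lemma curlFt_cont {F1 F2 : R2 → ℂ} (h1 : Continuous F1) (h2 : Continuous F2) :
    Continuous (curlFt F1 F2) := by
  unfold curlFt; fun_prop

lemma Nsz_cont {F1 F2 : R2 → ℂ} (h1 : Continuous F1) (h2 : Continuous F2) :
    Continuous (Nsz F1 F2) := by
  have := dotFt_cont h1 h2
  unfold Nsz; fun_prop

lemma Tsz_props {Γ : Set R2} (V : Xelt Γ) :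
    Integrable (fun ξ => wt ξ * Nsz V.c1.ft V.c2.ft ξ ^ 2) volume ∧
    (∫ ξ, wt ξ * ‖V.c1.ft ξ‖ ^ 2) ≤ Tsz V ∧ (∫ ξ, wt ξ * ‖V.c2.ft ξ‖ ^ 2) ≤ Tsz V ∧
    Real.sqrt (Tsz V) = 2 * π * Xnorm V := by
  have i1 : Integrable (fun ξ => wt ξ * ‖V.c1.ft ξ‖ ^ 2) volume := V.c1.mem
  have i2 : Integrable (fun ξ => wt ξ * ‖V.c2.ft ξ‖ ^ 2) volume := V.c2.mem
  have i3 : Integrable (fun ξ => wt ξ * ‖dotFt V.c1.ft V.c2.ft ξ‖ ^ 2) volume := V.divMem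
  have he : (fun ξ => wt ξ * Nsz V.c1.ft V.c2.ft ξ ^ 2) = fun ξ => wt ξ * ‖V.c1.ft ξ‖ ^ 2 +
      wt ξ * ‖V.c2.ft ξ‖ ^ 2 + wt ξ * ‖dotFt V.c1.ft V.c2.ft ξ‖ ^ 2 := by
    ext ξ
    unfold Nsz
    rw [Real.sq_sqrt (by positivity)]
    ring
  have hT : Tsz V = (∫ ξ, wt ξ * ‖V.c1.ft ξ‖ ^ 2) + (∫ ξ, wt ξ * ‖V.c2.ft ξ‖ ^ 2) +
      ∫ ξ, wt ξ * ‖dotFt V.c1.ft V.c2.ft ξ‖ ^ 2 := by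
    unfold Tsz
    have i12 : Integrable (fun ξ => wt ξ * ‖V.c1.ft ξ‖ ^ 2 + wt ξ * ‖V.c2.ft ξ‖ ^ 2) volume :=
      i1.add i2
    rw [he, integral_add i12 i3, integral_add i1 i2]
  have n1 : 0 ≤ ∫ ξ, wt ξ * ‖V.c1.ft ξ‖ ^ 2 :=
    integral_nonneg fun ξ => mul_nonneg (wt_pos ξ).le (sq_nonneg _)
  have n2 : 0 ≤ ∫ ξ, wt ξ * ‖V.c2.ft ξ‖ ^ 2 :=
    integral_nonneg fun ξ => mul_nonneg (wt_pos ξ).le (sq_nonneg _)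
  have n3 : 0 ≤ ∫ ξ, wt ξ * ‖dotFt V.c1.ft V.c2.ft ξ‖ ^ 2 :=
    integral_nonneg fun ξ => mul_nonneg (wt_pos ξ).le (sq_nonneg _)
  refine ⟨by rw [he]; exact (i1.add i2).add i3, by linarith, by linarith, ?_⟩
  have hX : XnormSq V = ((2 * π) ^ 2)⁻¹ * Tsz V := by
    rw [hT]
    unfold XnormSq HnormSq wnormSq divFt
    simp only [norm_mul, Complex.norm_I, one_mul]
    change ((2 * π) ^ 2)⁻¹ * (∫ ξ, wt ξ * ‖V.c1.ft ξ‖ ^ 2) +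
      ((2 * π) ^ 2)⁻¹ * (∫ ξ, wt ξ * ‖V.c2.ft ξ‖ ^ 2) +
      ((2 * π) ^ 2)⁻¹ * (∫ ξ, wt ξ * ‖dotFt V.c1.ft V.c2.ft ξ‖ ^ 2) = _
    ring
  unfold Xnorm
  rw [hX, Real.sqrt_mul (by positivity), Real.sqrt_inv, Real.sqrt_sq (by positivity),
    ← mul_assoc, mul_inv_cancel₀ (by positivity), one_mul]

/-- the integral defining `B(W,V)` converges absolutely for all
`W, V ∈ X`, and `B` is a bounded sesquilinear form on `X × X`:
`|B(W,V)| ≤ C ‖W‖_X ‖V‖_X`. -/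
theorem statement1 (Γ : Set R2) (hΓ : IsLipschitzDomain Γ) (k : ℝ) (hk : 0 < k) :
    ∃ C > 0, ∀ W V : Xelt Γ,
      Integrable (fun ξ : R2 => Bintegrand k W.c1.ft W.c2.ft V.c1.ft V.c2.ft ξ) volume ∧
      ‖Bform k W V‖ ≤ C * Xnorm W * Xnorm V := by
  obtain ⟨C, hC0, hC⟩ := local_bound Γ hΓ.2.1 (2 * k) (by positivity)
  set g : R2 → ℝ := (Metric.closedBall (0 : R2) (2 * k)).indicator fun ξ => ‖g0hat k ξ‖ with hg
  have hgi : Integrable g volume := g0_int k hk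
  have hg0 : ∀ ξ, 0 ≤ g ξ := fun ξ => Set.indicator_nonneg (fun _ _ => norm_nonneg _) ξ
  have hGI : 0 ≤ ∫ ξ, g ξ := integral_nonneg hg0
  set A : ℝ := (1 + 2 * k ^ 2) * (1 + 1 / (2 * k)) with hA
  have hA0 : 0 < A := by positivity
  refine ⟨(2 * π) ^ 2 * ((∫ ξ, g ξ) * (5 * k ^ 2 * (2 * C ^ 2)) + A), by positivity,
    fun W V => ?_⟩
  obtain ⟨wi, w1, w2, w3⟩ := Tsz_props W
  obtain ⟨vi, v1, v2, v3⟩ := Tsz_props V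
  have hW1 := W.c1.cont
  have hW2 := W.c2.cont
  have hV1 := V.c1.cont
  have hV2 := V.c2.cont
  have hNW := Nsz_cont hW1 hW2
  have hNV := Nsz_cont hV1 hV2
  have hw := wt_cont
  have hloc : ∀ U : Xelt Γ, ∀ ξ, ‖ξ‖ ≤ 2 * k →
      Real.sqrt (‖U.c1.ft ξ‖ ^ 2 + ‖U.c2.ft ξ‖ ^ 2) ≤
        Real.sqrt 2 * (C * Real.sqrt (Tsz U)) := by
    intro U ξ hξ
    obtain ⟨-, u1, u2, -⟩ := Tsz_props U
    have a1 : ‖U.c1.ft ξ‖ ≤ C * Real.sqrt (Tsz U) := (hC U.c1 ξ hξ).trans (by gcongr)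
    have a2 : ‖U.c2.ft ξ‖ ≤ C * Real.sqrt (Tsz U) := (hC U.c2 ξ hξ).trans (by gcongr)
    have hn : 0 ≤ C * Real.sqrt (Tsz U) := by positivity
    calc _ ≤ Real.sqrt (2 * (C * Real.sqrt (Tsz U)) ^ 2) := by
          apply Real.sqrt_le_sqrt
          nlinarith [norm_nonneg (U.c1.ft ξ), norm_nonneg (U.c2.ft ξ)]
      _ = _ := by rw [Real.sqrt_mul (by norm_num), Real.sqrt_sq hn]
  have hfe : ∀ (U : Xelt Γ) ξ, (Real.sqrt (wt ξ) * Nsz U.c1.ft U.c2.ft ξ) ^ 2 =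
      wt ξ * Nsz U.c1.ft U.c2.ft ξ ^ 2 := fun U ξ => by
    rw [mul_pow, Real.sq_sqrt (wt_pos ξ).le]
  have hpe : ∀ ξ, (Real.sqrt (wt ξ) * Nsz W.c1.ft W.c2.ft ξ) *
      (Real.sqrt (wt ξ) * Nsz V.c1.ft V.c2.ft ξ) =
      wt ξ * (Nsz W.c1.ft W.c2.ft ξ * Nsz V.c1.ft V.c2.ft ξ) := fun ξ => by
    have := Real.mul_self_sqrt (wt_pos ξ).le
    linear_combination (Nsz W.c1.ft W.c2.ft ξ * Nsz V.c1.ft V.c2.ft ξ) * this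
  have hN0 : ∀ (U : Xelt Γ) ξ, 0 ≤ Nsz U.c1.ft U.c2.ft ξ := fun U ξ => Real.sqrt_nonneg _
  have hcs := cs_aux (f := fun ξ => Real.sqrt (wt ξ) * Nsz W.c1.ft W.c2.ft ξ)
    (g := fun ξ => Real.sqrt (wt ξ) * Nsz V.c1.ft V.c2.ft ξ)
    (by fun_prop : Continuous _).aestronglyMeasurable
    (by fun_prop : Continuous _).aestronglyMeasurable
    (fun ξ => mul_nonneg (Real.sqrt_nonneg _) (hN0 W ξ))
    (fun ξ => mul_nonneg (Real.sqrt_nonneg _) (hN0 V ξ))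
    (by simpa only [hfe] using wi) (by simpa only [hfe] using vi)
  simp only [hpe, hfe] at hcs
  change _ ∧ _ ≤ Real.sqrt (Tsz W) * Real.sqrt (Tsz V) at hcs
  set a := Real.sqrt (Tsz W) with ha
  set b := Real.sqrt (Tsz V) with hb
  have ha0 : 0 ≤ a := Real.sqrt_nonneg _
  have hb0 : 0 ≤ b := Real.sqrt_nonneg _
  set c : ℝ := 5 * k ^ 2 * (2 * C ^ 2) * (a * b) with hc
  have hc0 : 0 ≤ c := by positivity
  have hbi : Integrable (fun ξ => g ξ * c +
      A * (wt ξ * (Nsz W.c1.ft W.c2.ft ξ * Nsz V.c1.ft V.c2.ft ξ))) volume :=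
    (hgi.mul_const c).add (hcs.1.const_mul A)
  have hpt : ∀ ξ, ‖Bintegrand k W.c1.ft W.c2.ft V.c1.ft V.c2.ft ξ‖ ≤ g ξ * c +
      A * (wt ξ * (Nsz W.c1.ft W.c2.ft ξ * Nsz V.c1.ft V.c2.ft ξ)) := by
    intro ξ
    have hnn : 0 ≤ A * (wt ξ * (Nsz W.c1.ft W.c2.ft ξ * Nsz V.c1.ft V.c2.ft ξ)) :=
      mul_nonneg hA0.le (mul_nonneg (wt_pos ξ).le (mul_nonneg (hN0 W ξ) (hN0 V ξ)))
    rcases le_or_gt ‖ξ‖ (2 * k) with h | h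
    · refine le_add_of_le_of_nonneg ?_ hnn
      refine (B_near k _ _ _ _ ξ h).trans ?_
      have hgx : g ξ = ‖g0hat k ξ‖ := Set.indicator_of_mem (by simpa using h) _
      rw [hgx]
      refine mul_le_mul_of_nonneg_left ?_ (norm_nonneg _)
      have h2 : Real.sqrt 2 * Real.sqrt 2 = 2 := Real.mul_self_sqrt (by norm_num)
      calc _ ≤ 5 * k ^ 2 * ((Real.sqrt 2 * (C * a)) * (Real.sqrt 2 * (C * b))) := by
            gcongr
            · exact hloc W ξ h
            · exact hloc V ξ h
        _ = 5 * k ^ 2 * ((Real.sqrt 2 * Real.sqrt 2) * C ^ 2) * (a * b) := by ring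
        _ = c := by rw [h2]
    · exact le_add_of_nonneg_of_le (mul_nonneg (hg0 ξ) hc0) (B_far k hk _ _ _ _ ξ h)
  have hmeas : AEStronglyMeasurable
      (fun ξ : R2 => Bintegrand k W.c1.ft W.c2.ft V.c1.ft V.c2.ft ξ) volume := by
    have m0 := g0_meas k
    have m1 := (dotFt_cont hW1 hW2).measurable
    have m2 := (dotFt_cont hV1 hV2).measurable
    have m3 := (curlFt_cont hW1 hW2).measurable
    have m4 := (curlFt_cont hV1 hV2).measurable
    have m2' := Complex.continuous_conj.measurable.comp m2
    have m4' := Complex.continuous_conj.measurable.comp m4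
    have n1 : Measurable fun ξ : R2 => ((‖ξ‖ ^ 2 - k ^ 2 : ℝ) : ℂ) := by fun_prop
    have n2 : Measurable fun ξ : R2 => ((‖ξ‖ ^ 2 : ℝ) : ℂ) := by fun_prop
    exact ((m0.mul ((n1.mul (m1.mul m2')).sub
      (measurable_const.mul (m3.mul m4')))).div n2).aestronglyMeasurable
  refine ⟨hbi.mono' hmeas (ae_of_all _ hpt), ?_⟩
  unfold Bform
  calc _ ≤ ∫ ξ, (g ξ * c + A * (wt ξ * (Nsz W.c1.ft W.c2.ft ξ * Nsz V.c1.ft V.c2.ft ξ))) :=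
        norm_integral_le_of_norm_le hbi (ae_of_all _ hpt)
    _ = (∫ ξ, g ξ) * c +
        A * ∫ ξ, wt ξ * (Nsz W.c1.ft W.c2.ft ξ * Nsz V.c1.ft V.c2.ft ξ) := by
        rw [integral_add (hgi.mul_const c) (hcs.1.const_mul A), integral_mul_const,
          integral_const_mul]
    _ ≤ (∫ ξ, g ξ) * c + A * (a * b) := by gcongr; exact hcs.2
    _ = _ := by rw [hc, w3, v3]; ring

end
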